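/- Let (H, μ, Δ, α, R) be a cobraided Hom-bialgebra over a commutative ring k with α injective. Then for all integers n, k ≥ 0, H^{n,k} = (H, μ^(n), Δ^(n), α^(2^n), R^{α^k}), where μ^(n) = α^(2^n − 1) ∘ μ, Δ^(n) = Δ ∘ α^(2^n − 1), and R^{α^k} = R ∘ (α^k ⊗ α^k), is again a cobraided Hom-bialgebra. -/

import Mathlib

/-!
A linear self-map `β` of `H` that commutes with `α` and respects `μ` and `Δ` can be used in two
independent ways to deform a cobraided Hom-bialgebra `(H, μ, Δ, α, R)`.

* `(H, β ∘ μ, Δ ∘ β, α ∘ β, R)` is cobraided (`IsCobraided.twist`): each axiom is the original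
  one evaluated at `β x, β y, …`, followed where needed by an application of `β`.
* `(H, μ, Δ, α, R ∘ (β ⊗ β))` is cobraided when `β` is injective (`IsCobraided.form_comp`): the two
  multiplicativity axioms are again the original ones at `β x, β y, β z`; for the last axiom only
  its image under `β` is the original axiom at `β x, β y`, and injectivity cancels `β`.

Every power of `α` is such a `β`, and `α ^ (2 ^ n) = α ∘ α ^ (2 ^ n - 1)`, so the theorem follows by
applying the second construction with `β = α ^ m` and the first with `β = α ^ (2 ^ n - 1)`.
-/

open TensorProduct LinearMap

variable {k : Type*} [CommRing k]

/-- `(A, μ, α)` is a Hom-associative algebra: `α` is multiplicative with respect to the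
k-bilinear multiplication `μ`, and `μ` is Hom-associative. -/
def IsHomAssoc {A : Type*} [AddCommGroup A] [Module k A]
    (μ : A →ₗ[k] A →ₗ[k] A) (α : A →ₗ[k] A) : Prop :=
  (∀ x y, α (μ x y) = μ (α x) (α y)) ∧
  (∀ x y z, μ (α x) (μ y z) = μ (μ x y) (α z))

/-- `(C, Δ, α)` is a Hom-coassociative coalgebra: `(α ⊗ α) ∘ Δ = Δ ∘ α` and
`(α ⊗ Δ) ∘ Δ = (Δ ⊗ α) ∘ Δ` (up to the associator of the tensor product). -/
def IsHomCoassoc {C : Type*} [AddCommGroup C] [Module k C]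
    (Δ : C →ₗ[k] C ⊗[k] C) (α : C →ₗ[k] C) : Prop :=
  (TensorProduct.map α α ∘ₗ Δ = Δ ∘ₗ α) ∧
  (TensorProduct.map α Δ ∘ₗ Δ =
    (TensorProduct.assoc k C C C).toLinearMap ∘ₗ (TensorProduct.map Δ α ∘ₗ Δ))

/-- `(H, μ, Δ, α)` is a Hom-bialgebra: a Hom-associative algebra and a Hom-coassociative
coalgebra such that `Δ ∘ μ = (μ ⊗ μ) ∘ (Id ⊗ τ ⊗ Id) ∘ (Δ ⊗ Δ)`, stated elementwise as
`Δ (μ x y) = map₂ μ μ (Δ x) (Δ y)`. -/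
def IsHomBialgebra {H : Type*} [AddCommGroup H] [Module k H]
    (μ : H →ₗ[k] H →ₗ[k] H) (Δ : H →ₗ[k] H ⊗[k] H) (α : H →ₗ[k] H) : Prop :=
  IsHomAssoc μ α ∧ IsHomCoassoc Δ α ∧
  ∀ x y, Δ (μ x y) = TensorProduct.map₂ μ μ (Δ x) (Δ y)

/-- `(H, μ, Δ, α, R)` is a cobraided Hom-bialgebra: a Hom-bialgebra with a bilinear form
`R : H ⊗ H → k` satisfying `R ∘ (μ ⊗ α) = R^{⊗2} ∘ (2 3) ∘ (α^{⊗2} ⊗ Δ)`,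
`R ∘ (α ⊗ μ) = R^{⊗2} ∘ (2 3 4) ∘ (Δ ⊗ α^{⊗2})`, and
`(μ ⊗ R) ∘ (1 2 3) ∘ Δ^{⊗2} = (R ⊗ μ) ∘ (2 3) ∘ Δ^{⊗2}`. -/
def IsCobraided {H : Type*} [AddCommGroup H] [Module k H]
    (μ : H →ₗ[k] H →ₗ[k] H) (Δ : H →ₗ[k] H ⊗[k] H)
    (α : H →ₗ[k] H) (R : H ⊗[k] H →ₗ[k] k) : Prop :=
  IsHomBialgebra μ Δ α ∧
  (R ∘ₗ TensorProduct.map (TensorProduct.lift μ) α =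
    LinearMap.mul' k k ∘ₗ TensorProduct.map R R ∘ₗ
      (TensorProduct.tensorTensorTensorComm k H H H H).toLinearMap ∘ₗ
      TensorProduct.map (TensorProduct.map α α) Δ) ∧
  (R ∘ₗ TensorProduct.map α (TensorProduct.lift μ) =
    LinearMap.mul' k k ∘ₗ TensorProduct.map R R ∘ₗ
      (TensorProduct.tensorTensorTensorComm k H H H H).toLinearMap ∘ₗ
      TensorProduct.map LinearMap.id (TensorProduct.comm k H H).toLinearMap ∘ₗ
      TensorProduct.map Δ (TensorProduct.map α α)) ∧
  ((TensorProduct.rid k H).toLinearMap ∘ₗ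
      TensorProduct.map (TensorProduct.lift μ) R ∘ₗ
      TensorProduct.map (TensorProduct.comm k H H).toLinearMap LinearMap.id ∘ₗ
      (TensorProduct.tensorTensorTensorComm k H H H H).toLinearMap ∘ₗ
      TensorProduct.map Δ Δ =
    (TensorProduct.lid k H).toLinearMap ∘ₗ
      TensorProduct.map R (TensorProduct.lift μ) ∘ₗ
      (TensorProduct.tensorTensorTensorComm k H H H H).toLinearMap ∘ₗ
      TensorProduct.map Δ Δ)

/-- `β` commutes with `α` and is compatible with the multiplication and the comultiplication. -/
structure IsTwistMap {H : Type*} [AddCommGroup H] [Module k H]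
    (μ : H →ₗ[k] H →ₗ[k] H) (Δ : H →ₗ[k] H ⊗[k] H) (α β : H →ₗ[k] H) : Prop where
  comm : ∀ x, β (α x) = α (β x)
  mul : ∀ x y, β (μ x y) = μ (β x) (β y)
  comul : ∀ x, TensorProduct.map β β (Δ x) = Δ (β x)

theorem IsHomBialgebra.isTwistMap_pow {H : Type*} [AddCommGroup H] [Module k H]
    {μ : H →ₗ[k] H →ₗ[k] H} {Δ : H →ₗ[k] H ⊗[k] H} {α : H →ₗ[k] H}
    (h : IsHomBialgebra μ Δ α) (j : ℕ) : IsTwistMap μ Δ α (α ^ j) := by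
  obtain ⟨⟨hmul, -⟩, ⟨hcomul, -⟩, -⟩ := h
  induction j with
  | zero => exact ⟨fun x => rfl, fun x y => rfl, fun x => by simp [Module.End.one_eq_id]⟩
  | succ j ih =>
    refine ⟨fun x => ?_, fun x y => ?_, fun x => ?_⟩
    · simp only [pow_succ', Module.End.mul_apply, ih.comm]
    · simp only [pow_succ', Module.End.mul_apply, ih.mul, hmul]
    · simp only [pow_succ', Module.End.mul_eq_comp, TensorProduct.map_comp,
        LinearMap.comp_apply, ih.comul]
      exact LinearMap.congr_fun hcomul _

theorem IsHomBialgebra.twist {H : Type*} [AddCommGroup H] [Module k H]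
    {μ : H →ₗ[k] H →ₗ[k] H} {Δ : H →ₗ[k] H ⊗[k] H} {α β : H →ₗ[k] H}
    (h : IsHomBialgebra μ Δ α) (hβ : IsTwistMap μ Δ α β) :
    IsHomBialgebra (μ.compr₂ β) (Δ ∘ₗ β) (α ∘ₗ β) := by
  obtain ⟨⟨hmul, hassoc⟩, ⟨hcomul, hcoassoc⟩, hcompat⟩ := h
  refine ⟨⟨fun x y => ?_, fun x y z => ?_⟩, ⟨?_, ?_⟩, fun x y => ?_⟩
  · simp [hβ.mul, hmul, hβ.comm]
  · simp only [LinearMap.compr₂_apply, LinearMap.comp_apply, ← hβ.mul, ← hβ.comm, hassoc]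
  · ext x
    have e := LinearMap.congr_fun hcomul (β (β x))
    simp only [LinearMap.comp_apply] at e
    simp only [TensorProduct.map_comp, LinearMap.comp_apply, hβ.comul, e, hβ.comm]
  · ext x
    have e := LinearMap.congr_fun hcoassoc (β (β x))
    simp only [LinearMap.comp_apply] at e
    simpa only [TensorProduct.map_comp, LinearMap.comp_apply, hβ.comul] using e
  · have hnat : ∀ s t : H ⊗[k] H, TensorProduct.map₂ (μ.compr₂ β) (μ.compr₂ β) s t =
        TensorProduct.map β β (TensorProduct.map₂ μ μ s t) := by
      intro s t
      have e : TensorProduct.map₂ (μ.compr₂ β) (μ.compr₂ β) =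
          (TensorProduct.map₂ μ μ).compr₂ (TensorProduct.map β β) := by
        ext a b c d
        simp
      rw [e, LinearMap.compr₂_apply]
    simp only [LinearMap.comp_apply, LinearMap.compr₂_apply, hnat, ← hcompat, hβ.mul, hβ.comul]

theorem IsCobraided.twist {H : Type*} [AddCommGroup H] [Module k H]
    {μ : H →ₗ[k] H →ₗ[k] H} {Δ : H →ₗ[k] H ⊗[k] H} {α β : H →ₗ[k] H} {R : H ⊗[k] H →ₗ[k] k}
    (h : IsCobraided μ Δ α R) (hβ : IsTwistMap μ Δ α β) :
    IsCobraided (μ.compr₂ β) (Δ ∘ₗ β) (α ∘ₗ β) R := by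
  obtain ⟨hb, h1, h2, h3⟩ := h
  refine ⟨hb.twist hβ, ?_, ?_, ?_⟩
  · ext x y z
    have e := LinearMap.congr_fun h1 ((β x ⊗ₜ β y) ⊗ₜ β z)
    simpa [hβ.mul] using e
  · ext x y z
    have e := LinearMap.congr_fun h2 (β x ⊗ₜ (β y ⊗ₜ β z))
    simpa [hβ.mul] using e
  · -- Both sides of the last axiom for `β ∘ μ` are `β` applied to the corresponding side for `μ`.
    have hl : ∀ t : (H ⊗[k] H) ⊗[k] (H ⊗[k] H),
        TensorProduct.rid k H (TensorProduct.map (TensorProduct.lift (μ.compr₂ β)) R t) =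
          β (TensorProduct.rid k H (TensorProduct.map (TensorProduct.lift μ) R t)) := by
      intro t
      induction t using TensorProduct.induction_on with
      | zero => simp
      | tmul a b => simp [TensorProduct.lift_compr₂]
      | add a b ha hb => simp only [map_add, ha, hb]
    have hr : ∀ t : (H ⊗[k] H) ⊗[k] (H ⊗[k] H),
        TensorProduct.lid k H (TensorProduct.map R (TensorProduct.lift (μ.compr₂ β)) t) =
          β (TensorProduct.lid k H (TensorProduct.map R (TensorProduct.lift μ) t)) := by
      intro t
      induction t using TensorProduct.induction_on with
      | zero => simp
      | tmul a b => simp [TensorProduct.lift_compr₂]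
      | add a b ha hb => simp only [map_add, ha, hb]
    ext x y
    have e := congrArg β (LinearMap.congr_fun h3 (β x ⊗ₜ β y))
    simp only [LinearMap.comp_apply, LinearEquiv.coe_coe, TensorProduct.map_tmul] at e
    simp only [TensorProduct.AlgebraTensorModule.curry_apply, TensorProduct.curry_apply,
      LinearMap.coe_restrictScalars, LinearMap.comp_apply, LinearEquiv.coe_coe,
      TensorProduct.map_tmul, hl, hr]
    exact e

theorem IsCobraided.form_comp {H : Type*} [AddCommGroup H] [Module k H]
    {μ : H →ₗ[k] H →ₗ[k] H} {Δ : H →ₗ[k] H ⊗[k] H} {α β : H →ₗ[k] H} {R : H ⊗[k] H →ₗ[k] k}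
    (h : IsCobraided μ Δ α R) (hβ : IsTwistMap μ Δ α β) (hinj : Function.Injective β) :
    IsCobraided μ Δ α (R ∘ₗ TensorProduct.map β β) := by
  obtain ⟨hb, h1, h2, h3⟩ := h
  have hnat : ∀ s t : H ⊗[k] H,
      TensorProduct.map (R ∘ₗ TensorProduct.map β β) (R ∘ₗ TensorProduct.map β β)
        (TensorProduct.tensorTensorTensorComm k H H H H (s ⊗ₜ t)) =
      TensorProduct.map R R (TensorProduct.tensorTensorTensorComm k H H H H
        (TensorProduct.map β β s ⊗ₜ TensorProduct.map β β t)) := by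
    intro s t
    have e : TensorProduct.map (R ∘ₗ TensorProduct.map β β) (R ∘ₗ TensorProduct.map β β) ∘ₗ
        (TensorProduct.tensorTensorTensorComm k H H H H).toLinearMap =
        TensorProduct.map R R ∘ₗ (TensorProduct.tensorTensorTensorComm k H H H H).toLinearMap ∘ₗ
          TensorProduct.map (TensorProduct.map β β) (TensorProduct.map β β) := by
      ext a b c d
      simp
    exact LinearMap.congr_fun e (s ⊗ₜ t)
  refine ⟨hb, ?_, ?_, ?_⟩
  · ext x y z
    have e := LinearMap.congr_fun h1 ((β x ⊗ₜ β y) ⊗ₜ β z)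
    simpa [hβ.mul, hβ.comm, hβ.comul, hnat] using e
  · ext x y z
    have e := LinearMap.congr_fun h2 (β x ⊗ₜ (β y ⊗ₜ β z))
    simpa [hβ.mul, hβ.comm, hβ.comul, hnat] using e
  · -- After applying `β`, each side is the corresponding side of the axiom for `R`,
    -- with `β` applied to all four tensor factors.
    have hl : ∀ s t : H ⊗[k] H,
        β (TensorProduct.rid k H (TensorProduct.map (TensorProduct.lift μ)
          (R ∘ₗ TensorProduct.map β β)
          (TensorProduct.map (TensorProduct.comm k H H).toLinearMap LinearMap.id
            (TensorProduct.tensorTensorTensorComm k H H H H (s ⊗ₜ t))))) =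
        TensorProduct.rid k H (TensorProduct.map (TensorProduct.lift μ) R
          (TensorProduct.map (TensorProduct.comm k H H).toLinearMap LinearMap.id
            (TensorProduct.tensorTensorTensorComm k H H H H
              (TensorProduct.map β β s ⊗ₜ TensorProduct.map β β t)))) := by
      intro s t
      induction s using TensorProduct.induction_on with
      | zero => simp
      | add a b ha hb => simp only [map_add, TensorProduct.add_tmul, ha, hb]
      | tmul a b =>
        induction t using TensorProduct.induction_on with
        | zero => simp
        | add c d hc hd => simp only [map_add, TensorProduct.tmul_add, hc, hd]
        | tmul c d => simp [hβ.mul]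
    have hr : ∀ s t : H ⊗[k] H,
        β (TensorProduct.lid k H (TensorProduct.map (R ∘ₗ TensorProduct.map β β)
          (TensorProduct.lift μ)
          (TensorProduct.tensorTensorTensorComm k H H H H (s ⊗ₜ t)))) =
        TensorProduct.lid k H (TensorProduct.map R (TensorProduct.lift μ)
          (TensorProduct.tensorTensorTensorComm k H H H H
            (TensorProduct.map β β s ⊗ₜ TensorProduct.map β β t))) := by
      intro s t
      induction s using TensorProduct.induction_on with
      | zero => simp
      | add a b ha hb => simp only [map_add, TensorProduct.add_tmul, ha, hb]
      | tmul a b =>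
        induction t using TensorProduct.induction_on with
        | zero => simp
        | add c d hc hd => simp only [map_add, TensorProduct.tmul_add, hc, hd]
        | tmul c d => simp [hβ.mul]
    ext x y
    apply hinj
    have e := LinearMap.congr_fun h3 (β x ⊗ₜ β y)
    simp only [LinearMap.comp_apply, LinearEquiv.coe_coe, TensorProduct.map_tmul] at e
    simp only [TensorProduct.AlgebraTensorModule.curry_apply, TensorProduct.curry_apply,
      LinearMap.coe_restrictScalars, LinearMap.comp_apply, LinearEquiv.coe_coe,
      TensorProduct.map_tmul, hl, hr, hβ.comul]
    exact e

/-- If `(H, μ, Δ, α, R)` is a cobraided Hom-bialgebra with `α` injective,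
then for all `n, m ≥ 0` the tuple
`H^{n,m} = (H, μ⁽ⁿ⁾, Δ⁽ⁿ⁾, α^(2ⁿ), R^{αᵐ} = R ∘ (αᵐ ⊗ αᵐ))` is again a cobraided
Hom-bialgebra. -/
theorem derived_cobraided_injective {H : Type*} [AddCommGroup H] [Module k H]
    (μ : H →ₗ[k] H →ₗ[k] H) (Δ : H →ₗ[k] H ⊗[k] H) (α : H →ₗ[k] H)
    (R : H ⊗[k] H →ₗ[k] k)
    (h : IsCobraided μ Δ α R)
    (hinj : Function.Injective α) :
    ∀ n m : ℕ, IsCobraided (μ.compr₂ (α ^ (2 ^ n - 1))) (Δ ∘ₗ (α ^ (2 ^ n - 1)))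
      (α ^ (2 ^ n)) (R ∘ₗ TensorProduct.map (α ^ m) (α ^ m)) := by
  intro n m
  have hinj' : Function.Injective (α ^ m) := by
    rw [Module.End.coe_pow]
    exact hinj.iterate m
  have key := (h.form_comp (h.1.isTwistMap_pow m) hinj').twist (h.1.isTwistMap_pow (2 ^ n - 1))
  have hpow : α ∘ₗ α ^ (2 ^ n - 1) = α ^ (2 ^ n) := by
    rw [← Module.End.mul_eq_comp, ← pow_succ', Nat.sub_add_cancel Nat.one_le_two_pow]
  rwa [hpow] at key
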